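/- (Theorem 2.2) The Gauss map of M satisfies Δ^{II} n = λ n on U for some real λ ≠ 0 if and only if M is part of a sphere, i.e. there exist c ∈ ℝ³ and r > 0 with ‖x(u) − c‖ = r for all u ∈ U; moreover if Δ^{II} n = λ n with λ ≠ 0 then H and K are nonzero constants on U. -/

import Mathlib

open Matrix

noncomputable section

/-- The parameter domain `ℝ²`. -/
abbrev Param : Type := Fin 2 → ℝ

/-- Vectors in Euclidean 3-space. -/
abbrev Vec3 : Type := Fin 3 → ℝ

/-- Partial derivative of a vector-valued function in the `i`-th coordinate direction. -/
noncomputable def pd (i : Fin 2) (f : Param → Vec3) (u : Param) : Vec3 :=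
  fderiv ℝ f u (Pi.single i 1)

/-- Partial derivative of a scalar function in the `i`-th coordinate direction. -/
noncomputable def pds (i : Fin 2) (f : Param → ℝ) (u : Param) : ℝ :=
  fderiv ℝ f u (Pi.single i 1)

/-- The Euclidean inner product on `ℝ³`. -/
def dot3 (a b : Vec3) : ℝ := ∑ k, a k * b k

/-- The Euclidean norm on `ℝ³`. -/
noncomputable def norm3 (a : Vec3) : ℝ := Real.sqrt (dot3 a a)

/-- The Gauss map `n = (x_{/1} × x_{/2}) / ‖x_{/1} × x_{/2}‖`. -/
noncomputable def gaussMap (x : Param → Vec3) (u : Param) : Vec3 :=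
  (norm3 (crossProduct (pd 0 x u) (pd 1 x u)))⁻¹ • crossProduct (pd 0 x u) (pd 1 x u)

/-- Components `g_{ij}` of the first fundamental form. -/
noncomputable def fformI (x : Param → Vec3) (u : Param) : Matrix (Fin 2) (Fin 2) ℝ :=
  Matrix.of fun i j => dot3 (pd i x u) (pd j x u)

/-- Components `b_{ij} = ⟨∂²x/∂u^i∂u^j, n⟩` of the second fundamental form. -/
noncomputable def fformII (x : Param → Vec3) (u : Param) : Matrix (Fin 2) (Fin 2) ℝ :=
  Matrix.of fun i j => dot3 (pd i (pd j x) u) (gaussMap x u)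

/-- Components `e_{ij} = ⟨n_{/i}, n_{/j}⟩` of the third fundamental form. -/
noncomputable def fformIII (x : Param → Vec3) (u : Param) : Matrix (Fin 2) (Fin 2) ℝ :=
  Matrix.of fun i j => dot3 (pd i (gaussMap x) u) (pd j (gaussMap x) u)

/-- The Gauss curvature `K = det(b_{ij}) / det(g_{ij})`. -/
noncomputable def gaussCurv (x : Param → Vec3) (u : Param) : ℝ :=
  (fformII x u).det / (fformI x u).det

/-- The mean curvature `H = (1/2) g^{ij} b_{ij}`. -/
noncomputable def meanCurv (x : Param → Vec3) (u : Param) : ℝ :=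
  (1 / 2) * ∑ i, ∑ j, (fformI x u)⁻¹ i j * fformII x u i j

/-- First Beltrami operator `∇^J(φ, ψ) = a^{ij} φ_{/i} ψ_{/j}` with respect to the
fundamental form with component matrix `a`, for scalar `φ` and `ℝ³`-valued `ψ`. -/
noncomputable def beltrami1 (a : Param → Matrix (Fin 2) (Fin 2) ℝ)
    (φ : Param → ℝ) (ψ : Param → Vec3) (u : Param) : Vec3 :=
  ∑ i, ∑ j, ((a u)⁻¹ i j * pds i φ u) • pd j ψ u

/-- Second Beltrami operator
`Δ^J f = −(1/√|det a|) ∂_i (√|det a| a^{ij} ∂_j f)` with respect to the fundamental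
form with component matrix `a`, acting componentwise on `ℝ³`-valued functions. -/
noncomputable def beltrami2 (a : Param → Matrix (Fin 2) (Fin 2) ℝ)
    (f : Param → Vec3) (u : Param) : Vec3 :=
  -((Real.sqrt |(a u).det|)⁻¹ •
    ∑ i, ∑ j, pd i (fun v => (Real.sqrt |(a v).det| * (a v)⁻¹ i j) • pd j f v) u)

/-- `x` is an immersion on `U`: the partial derivatives are linearly independent. -/
def Immersed (x : Param → Vec3) (U : Set Param) : Prop :=
  ∀ u ∈ U, LinearIndependent ℝ ![pd 0 x u, pd 1 x u]

/-- `f` is nonconstant on `U`. -/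
def NonconstOn (f : Param → Vec3) (U : Set Param) : Prop :=
  ¬ ∃ v : Vec3, ∀ u ∈ U, f u = v

section calculus
open scoped ContDiff Topology

theorem pd_smooth {U : Set Param} (hU : IsOpen U) {f : Param → Vec3} (i : Fin 2)
    (hf : ContDiffOn ℝ (⊤ : ℕ∞) f U) : ContDiffOn ℝ (⊤ : ℕ∞) (pd i f) U := by
  unfold pd
  exact (hf.fderiv_of_isOpen hU (by simp)).clm_apply contDiffOn_const

theorem smooth_diffAt {E : Type*} [NormedAddCommGroup E] [NormedSpace ℝ E]
    {U : Set Param} (hU : IsOpen U) {f : Param → E}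
    (hf : ContDiffOn ℝ (⊤ : ℕ∞) f U) {u : Param} (hu : u ∈ U) : DifferentiableAt ℝ f u :=
  (hf.contDiffAt (hU.mem_nhds hu)).differentiableAt (by simp)

theorem pd_symm {U : Set Param} (hU : IsOpen U) {f : Param → Vec3} (i j : Fin 2)
    (hf : ContDiffOn ℝ (⊤ : ℕ∞) f U) {u : Param} (hu : u ∈ U) :
    pd i (pd j f) u = pd j (pd i f) u := by
  have hs : IsSymmSndFDerivAt ℝ f u := by
    apply (hf.contDiffAt (hU.mem_nhds hu)).isSymmSndFDerivAt
    simp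
    exact WithTop.coe_le_coe.2 (le_top : (2 : ℕ∞) ≤ ⊤)
  have hd : DifferentiableAt ℝ (fderiv ℝ f) u :=
    smooth_diffAt hU (hf.fderiv_of_isOpen hU (by simp)) hu
  have key : ∀ i j : Fin 2, pd i (pd j f) u
      = fderiv ℝ (fderiv ℝ f) u (Pi.single i 1) (Pi.single j 1) := by
    intro i j
    have : pd j f = fun v => fderiv ℝ f v (Pi.single j 1) := rfl
    rw [this]
    unfold pd
    rw [fderiv_clm_apply hd (by fun_prop)]
    simp
  rw [key, key]
  exact hs _ _

theorem pd_apply {f : Param → Vec3} {u : Param} (hf : DifferentiableAt ℝ f u) (i : Fin 2)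
    (k : Fin 3) : pd i f u k = pds i (fun v => f v k) u := by
  unfold pd pds
  rw [fderiv_apply hf]
  rfl

theorem comp_diff {f : Param → Vec3} {u : Param} (hf : DifferentiableAt ℝ f u) (k : Fin 3) :
    DifferentiableAt ℝ (fun v => f v k) u := differentiableAt_pi.1 hf k

theorem pds_mul {f g : Param → ℝ} {u : Param} (hf : DifferentiableAt ℝ f u)
    (hg : DifferentiableAt ℝ g u) (i : Fin 2) :
    pds i (fun v => f v * g v) u = pds i f u * g u + f u * pds i g u := by
  unfold pds
  rw [fderiv_fun_mul hf hg]
  simp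
  ring

theorem pds_add {f g : Param → ℝ} {u : Param} (hf : DifferentiableAt ℝ f u)
    (hg : DifferentiableAt ℝ g u) (i : Fin 2) :
    pds i (fun v => f v + g v) u = pds i f u + pds i g u := by
  unfold pds
  rw [fderiv_fun_add hf hg]
  simp

theorem pds_sub {f g : Param → ℝ} {u : Param} (hf : DifferentiableAt ℝ f u)
    (hg : DifferentiableAt ℝ g u) (i : Fin 2) :
    pds i (fun v => f v - g v) u = pds i f u - pds i g u := by
  unfold pds
  rw [fderiv_fun_sub hf hg]
  simp

theorem pd_add {f g : Param → Vec3} {u : Param} (hf : DifferentiableAt ℝ f u)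
    (hg : DifferentiableAt ℝ g u) (i : Fin 2) :
    pd i (fun v => f v + g v) u = pd i f u + pd i g u := by
  unfold pd
  rw [fderiv_fun_add hf hg]
  simp

theorem pd_const_smul {f : Param → Vec3} {u : Param} (hf : DifferentiableAt ℝ f u)
    (c : ℝ) (i : Fin 2) :
    pd i (fun v => c • f v) u = c • pd i f u := by
  unfold pd
  rw [fderiv_fun_const_smul hf]
  simp

theorem pd_smul {f : Param → ℝ} {g : Param → Vec3} {u : Param} (hf : DifferentiableAt ℝ f u)
    (hg : DifferentiableAt ℝ g u) (i : Fin 2) :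
    pd i (fun v => f v • g v) u = pds i f u • g u + f u • pd i g u := by
  unfold pd pds
  rw [fderiv_fun_smul hf hg]
  simp [add_comm]

theorem pd_sub_const {f : Param → Vec3} {u : Param} (c : Vec3) (i : Fin 2) :
    pd i (fun v => f v - c) u = pd i f u := by
  unfold pd
  rw [fderiv_sub_const]

theorem pds_congr {U : Set Param} (hU : IsOpen U) {f g : Param → ℝ} (h : ∀ v ∈ U, f v = g v)
    {u : Param} (hu : u ∈ U) (i : Fin 2) : pds i f u = pds i g u := by
  unfold pds
  rw [Filter.EventuallyEq.fderiv_eq]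
  filter_upwards [hU.mem_nhds hu] with v hv using h v hv

theorem pd_congr {U : Set Param} (hU : IsOpen U) {f g : Param → Vec3} (h : ∀ v ∈ U, f v = g v)
    {u : Param} (hu : u ∈ U) (i : Fin 2) : pd i f u = pd i g u := by
  unfold pd
  rw [Filter.EventuallyEq.fderiv_eq]
  filter_upwards [hU.mem_nhds hu] with v hv using h v hv

theorem pds_const (c : ℝ) (u : Param) (i : Fin 2) : pds i (fun _ => c) u = 0 := by
  unfold pds
  simp

theorem pds_dot {f g : Param → Vec3} {u : Param} (hf : DifferentiableAt ℝ f u)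
    (hg : DifferentiableAt ℝ g u) (i : Fin 2) :
    pds i (fun v => dot3 (f v) (g v)) u = dot3 (pd i f u) (g u) + dot3 (f u) (pd i g u) := by
  have f' := comp_diff hf
  have g' := comp_diff hg
  simp only [dot3, Fin.sum_univ_three]
  rw [pds_add (((f' 0).fun_mul (g' 0)).fun_add ((f' 1).fun_mul (g' 1))) ((f' 2).fun_mul (g' 2)),
    pds_add ((f' 0).fun_mul (g' 0)) ((f' 1).fun_mul (g' 1)), pds_mul (f' 0) (g' 0),
    pds_mul (f' 1) (g' 1), pds_mul (f' 2) (g' 2)]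
  simp only [pd_apply hf, pd_apply hg]
  ring

theorem cross0 (a b : Vec3) : crossProduct a b 0 = a 1 * b 2 - a 2 * b 1 := by
  simp [cross_apply]
theorem cross1 (a b : Vec3) : crossProduct a b 1 = a 2 * b 0 - a 0 * b 2 := by
  simp [cross_apply]
theorem cross2 (a b : Vec3) : crossProduct a b 2 = a 0 * b 1 - a 1 * b 0 := by
  simp [cross_apply]

theorem dot_smooth {U : Set Param} {f g : Param → Vec3} (hf : ContDiffOn ℝ (⊤ : ℕ∞) f U)
    (hg : ContDiffOn ℝ (⊤ : ℕ∞) g U) :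
    ContDiffOn ℝ (⊤ : ℕ∞) (fun v => dot3 (f v) (g v)) U := by
  have f' := contDiffOn_pi.1 hf
  have g' := contDiffOn_pi.1 hg
  simp only [dot3, Fin.sum_univ_three]
  exact (((f' 0).mul (g' 0)).add ((f' 1).mul (g' 1))).add ((f' 2).mul (g' 2))

theorem cross_smooth {U : Set Param} {f g : Param → Vec3} (hf : ContDiffOn ℝ (⊤ : ℕ∞) f U)
    (hg : ContDiffOn ℝ (⊤ : ℕ∞) g U) :
    ContDiffOn ℝ (⊤ : ℕ∞) (fun v => crossProduct (f v) (g v)) U := by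
  have f' := contDiffOn_pi.1 hf
  have g' := contDiffOn_pi.1 hg
  refine contDiffOn_pi.2 fun k => ?_
  fin_cases k
  · simp only [Fin.zero_eta, cross0]
    exact ((f' 1).mul (g' 2)).sub ((f' 2).mul (g' 1))
  · simp only [Fin.mk_one, cross1]
    exact ((f' 2).mul (g' 0)).sub ((f' 0).mul (g' 2))
  · simp only [Fin.reduceFinMk, cross2]
    exact ((f' 0).mul (g' 1)).sub ((f' 1).mul (g' 0))

theorem pd_cross {U : Set Param} (hU : IsOpen U) {f g : Param → Vec3}
    (hfU : ContDiffOn ℝ (⊤ : ℕ∞) f U)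
    (hgU : ContDiffOn ℝ (⊤ : ℕ∞) g U) {u : Param} (hu : u ∈ U) (i : Fin 2) :
    pd i (fun v => crossProduct (f v) (g v)) u
      = crossProduct (pd i f u) (g u) + crossProduct (f u) (pd i g u) := by
  have hf := smooth_diffAt hU hfU hu
  have hg := smooth_diffAt hU hgU hu
  have f' := comp_diff hf
  have g' := comp_diff hg
  ext k
  rw [pd_apply (smooth_diffAt hU (cross_smooth hfU hgU) hu)]
  fin_cases k
  · simp only [Fin.zero_eta, cross0, Pi.add_apply]
    rw [pds_sub ((f' 1).fun_mul (g' 2)) ((f' 2).fun_mul (g' 1)), pds_mul (f' _) (g' _),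
      pds_mul (f' _) (g' _)]
    simp only [pd_apply hf, pd_apply hg]
    ring
  · simp only [Fin.mk_one, cross1, Pi.add_apply]
    rw [pds_sub ((f' 2).fun_mul (g' 0)) ((f' 0).fun_mul (g' 2)), pds_mul (f' _) (g' _),
      pds_mul (f' _) (g' _)]
    simp only [pd_apply hf, pd_apply hg]
    ring
  · simp only [Fin.reduceFinMk, cross2, Pi.add_apply]
    rw [pds_sub ((f' 0).fun_mul (g' 1)) ((f' 1).fun_mul (g' 0)), pds_mul (f' _) (g' _),
      pds_mul (f' _) (g' _)]
    simp only [pd_apply hf, pd_apply hg]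
    ring

theorem dot_const {U : Set Param} (hU : IsOpen U) {f g : Param → Vec3}
    (hf : ContDiffOn ℝ (⊤ : ℕ∞) f U) (hg : ContDiffOn ℝ (⊤ : ℕ∞) g U) (c : ℝ)
    (h : ∀ u ∈ U, dot3 (f u) (g u) = c) (i : Fin 2) {u : Param} (hu : u ∈ U) :
    dot3 (pd i f u) (g u) + dot3 (f u) (pd i g u) = 0 := by
  rw [← pds_dot (smooth_diffAt hU hf hu) (smooth_diffAt hU hg hu), pds_congr hU h hu, pds_const]

theorem clm_zero {E : Type*} [NormedAddCommGroup E] [NormedSpace ℝ E] (L : Param →L[ℝ] E)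
    (h : ∀ i : Fin 2, L (Pi.single i 1) = 0) : L = 0 := by
  ext v
  have hv : v = v 0 • Pi.single 0 1 + v 1 • Pi.single 1 1 := by
    ext k
    fin_cases k <;> simp
  rw [hv, map_add, map_smul, map_smul, h, h]
  simp

theorem const_of_deriv {E : Type*} [NormedAddCommGroup E] [NormedSpace ℝ E]
    {U : Set Param} (hU : IsOpen U) (hc : IsConnected U) {f : Param → E}
    (hf : ContDiffOn ℝ (⊤ : ℕ∞) f U)
    (h : ∀ u ∈ U, ∀ i : Fin 2, fderiv ℝ f u (Pi.single i 1) = 0) :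
    ∃ c, ∀ u ∈ U, f u = c := by
  apply hU.exists_is_const_of_fderiv_eq_zero hc.isPreconnected
    (hf.differentiableOn (by simp))
  intro u hu
  exact clm_zero _ (h u hu)

end calculus

section linalg

theorem dot_comm (a b : Vec3) : dot3 a b = dot3 b a := by
  simp only [dot3, Fin.sum_univ_three]; ring
theorem dot_add_l (a b c : Vec3) : dot3 (a + b) c = dot3 a c + dot3 b c := by
  simp only [dot3, Fin.sum_univ_three, Pi.add_apply]; ring
theorem dot_sub_l (a b c : Vec3) : dot3 (a - b) c = dot3 a c - dot3 b c := by
  simp only [dot3, Fin.sum_univ_three, Pi.sub_apply]; ring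
theorem dot_neg_l (a c : Vec3) : dot3 (-a) c = - dot3 a c := by
  simp only [dot3, Fin.sum_univ_three, Pi.neg_apply]; ring
theorem dot_smul_l (r : ℝ) (a c : Vec3) : dot3 (r • a) c = r * dot3 a c := by
  simp only [dot3, Fin.sum_univ_three, Pi.smul_apply, smul_eq_mul]; ring
theorem dot_add_r (a b c : Vec3) : dot3 c (a + b) = dot3 c a + dot3 c b := by
  simp only [dot3, Fin.sum_univ_three, Pi.add_apply]; ring
theorem dot_sub_r (a b c : Vec3) : dot3 c (a - b) = dot3 c a - dot3 c b := by
  simp only [dot3, Fin.sum_univ_three, Pi.sub_apply]; ring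
theorem dot_neg_r (a c : Vec3) : dot3 c (-a) = - dot3 c a := by
  simp only [dot3, Fin.sum_univ_three, Pi.neg_apply]; ring
theorem dot_smul_r (r : ℝ) (a c : Vec3) : dot3 c (r • a) = r * dot3 c a := by
  simp only [dot3, Fin.sum_univ_three, Pi.smul_apply, smul_eq_mul]; ring
theorem dot_zero_r (c : Vec3) : dot3 c 0 = 0 := by
  simp [dot3]
theorem dot_zero_l (c : Vec3) : dot3 0 c = 0 := by
  simp [dot3]
theorem dot_self_zero {a : Vec3} (h : dot3 a a = 0) : a = 0 := by
  simp only [dot3, Fin.sum_univ_three] at h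
  have h0 : a 0 = 0 := by nlinarith [sq_nonneg (a 0), sq_nonneg (a 1), sq_nonneg (a 2)]
  have h1 : a 1 = 0 := by nlinarith [sq_nonneg (a 0), sq_nonneg (a 1), sq_nonneg (a 2)]
  have h2 : a 2 = 0 := by nlinarith [sq_nonneg (a 0), sq_nonneg (a 1), sq_nonneg (a 2)]
  ext k
  fin_cases k <;> simp [h0, h1, h2]
theorem dot_self_nonneg (a : Vec3) : 0 ≤ dot3 a a := by
  simp only [dot3, Fin.sum_univ_three]
  nlinarith [sq_nonneg (a 0), sq_nonneg (a 1), sq_nonneg (a 2)]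
theorem dot_self_pos {a : Vec3} (h : a ≠ 0) : 0 < dot3 a a :=
  lt_of_le_of_ne (dot_self_nonneg a) fun h' => h (dot_self_zero h'.symm)

theorem ext_det {v a b c : Vec3} (hd : dot3 (crossProduct a b) c ≠ 0) (ha : dot3 v a = 0)
    (hb : dot3 v b = 0) (hc : dot3 v c = 0) : v = 0 := by
  have key : ∀ k, dot3 (crossProduct a b) c * v k = dot3 v a * crossProduct b c k
      + dot3 v b * crossProduct c a k + dot3 v c * crossProduct a b k := by
    intro k
    fin_cases k
    all_goals
      simp only [dot3, Fin.sum_univ_three, cross0, cross1, cross2, Fin.zero_eta, Fin.mk_one,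
        Fin.reduceFinMk]
      ring
  ext k
  have := key k
  rw [ha, hb, hc] at this
  simpa [hd] using this

theorem lagrange (a b c d : Vec3) : dot3 (crossProduct a b) (crossProduct c d)
    = dot3 a c * dot3 b d - dot3 a d * dot3 b c := by
  simp only [dot3, Fin.sum_univ_three, cross0, cross1, cross2]
  ring

theorem gram3 (a b t s : Vec3) :
    (dot3 a a * dot3 b b - dot3 a b ^ 2) * dot3 t s
      = dot3 t a * dot3 s a * dot3 b b - dot3 a b * (dot3 t a * dot3 s b + dot3 t b * dot3 s a)
        + dot3 t b * dot3 s b * dot3 a a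
        + dot3 (crossProduct a b) t * dot3 (crossProduct a b) s := by
  simp only [dot3, Fin.sum_univ_three, cross0, cross1, cross2]
  ring

theorem triple1 (a b c : Vec3) : dot3 (crossProduct b c) a = dot3 (crossProduct a b) c := by
  simp only [dot3, Fin.sum_univ_three, cross0, cross1, cross2]
  ring
theorem triple2 (a b c : Vec3) : dot3 (crossProduct a c) b = - dot3 (crossProduct a b) c := by
  simp only [dot3, Fin.sum_univ_three, cross0, cross1, cross2]
  ring
theorem cross_dot_l (a b : Vec3) : dot3 (crossProduct a b) a = 0 := by
  simp only [dot3, Fin.sum_univ_three, cross0, cross1, cross2]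
  ring
theorem cross_dot_r (a b : Vec3) : dot3 (crossProduct a b) b = 0 := by
  simp only [dot3, Fin.sum_univ_three, cross0, cross1, cross2]
  ring

/-- frame data at a point -/
structure Frame (a b n n1 n2 : Vec3) (m p q r : ℝ) : Prop where
  hm : 0 < m
  hc : crossProduct a b = m • n
  nn : dot3 n n = 1
  an : dot3 a n = 0
  bn : dot3 b n = 0
  n1n : dot3 n1 n = 0
  n2n : dot3 n2 n = 0
  a1 : dot3 n1 a = -p
  b1 : dot3 n1 b = -q
  a2 : dot3 n2 a = -q
  b2 : dot3 n2 b = -r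

variable {a b n n1 n2 : Vec3} {m p q r : ℝ}

theorem Frame.det (F : Frame a b n n1 n2 m p q r) : dot3 (crossProduct a b) n = m := by
  rw [F.hc, dot_smul_l, F.nn, mul_one]

theorem Frame.ext (F : Frame a b n n1 n2 m p q r) {v : Vec3} (ha : dot3 v a = 0)
    (hb : dot3 v b = 0) (hn : dot3 v n = 0) : v = 0 :=
  ext_det (by rw [F.det]; exact F.hm.ne') ha hb hn

theorem Frame.gram (F : Frame a b n n1 n2 m p q r) :
    m ^ 2 = dot3 a a * dot3 b b - dot3 a b ^ 2 := by
  have h := lagrange a b a b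
  rw [F.hc, dot_smul_l, dot_smul_r, F.nn, dot_comm b a] at h
  linarith

theorem Frame.F1 (F : Frame a b n n1 n2 m p q r) :
    m • (r • n1 - q • n2) = -(p * r - q ^ 2) • crossProduct b n := by
  rw [← sub_eq_zero]
  have h1 := triple1 a b n
  have h2 := cross_dot_l b n
  have h3 := cross_dot_r b n
  rw [F.det] at h1
  apply F.ext <;> simp only [dot_sub_l, dot_smul_l, F.n1n, F.n2n, F.a1, F.a2, F.b1, F.b2, h1, h2, h3] <;> ring

theorem Frame.F2 (F : Frame a b n n1 n2 m p q r) :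
    m • (-q • n1 + p • n2) = (p * r - q ^ 2) • crossProduct a n := by
  rw [← sub_eq_zero]
  have h1 := triple2 a b n
  have h2 := cross_dot_l a n
  have h3 := cross_dot_r a n
  rw [F.det] at h1
  apply F.ext <;> simp only [dot_sub_l, dot_add_l, dot_smul_l, F.n1n, F.n2n, F.a1, F.a2, F.b1, F.b2, h1, h2, h3] <;> ring

/-- `2H m²` -/
theorem Frame.Hn (F : Frame a b n n1 n2 m p q r) :
    m • (crossProduct b n1 - crossProduct a n2)
      = (dot3 b b * p - 2 * dot3 a b * q + dot3 a a * r) • n := by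
  rw [← sub_eq_zero]
  have e1 : m * dot3 (crossProduct b n1) n = dot3 b b * p - dot3 a b * q := by
    have h := lagrange b n1 a b
    rw [F.hc, dot_smul_r, F.a1, F.b1, dot_comm b a] at h
    linarith
  have e2 : m * dot3 (crossProduct a n2) n = dot3 a b * q - dot3 a a * r := by
    have h := lagrange a n2 a b
    rw [F.hc, dot_smul_r, F.a2, F.b2] at h
    linarith
  have t1 : dot3 (crossProduct b n1) a = 0 := by
    rw [triple1, F.hc, dot_smul_l, dot_comm, F.n1n, mul_zero]
  have t2 : dot3 (crossProduct a n2) b = 0 := by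
    rw [triple2, F.hc, dot_smul_l, dot_comm, F.n2n, mul_zero, neg_zero]
  have t3 := cross_dot_l b n1
  have t4 := cross_dot_l a n2
  apply F.ext
  · simp only [dot_sub_l, dot_smul_l, t1, t4, dot_comm n a, F.an]; ring
  · simp only [dot_sub_l, dot_smul_l, t2, t3, dot_comm n b, F.bn]; ring
  · simp only [dot_sub_l, dot_smul_l, F.nn]; linear_combination e1 - e2

theorem Frame.CH (F : Frame a b n n1 n2 m p q r) {t s : Vec3} (ht : dot3 t n = 0) :
    m ^ 2 * dot3 t s
      = dot3 t a * dot3 s a * dot3 b b - dot3 a b * (dot3 t a * dot3 s b + dot3 t b * dot3 s a)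
        + dot3 t b * dot3 s b * dot3 a a := by
  rw [F.gram, gram3, F.hc, dot_smul_l m n t, dot_comm n t, ht]
  ring

/-- third fundamental form -/
theorem Frame.third (F : Frame a b n n1 n2 m p q r) {L k : ℝ}
    (hL : dot3 b b * p - 2 * dot3 a b * q + dot3 a a * r = L * m ^ 2)
    (hk : p * r - q ^ 2 = k * m ^ 2) :
    dot3 n1 n1 = L * p - k * dot3 a a ∧ dot3 n1 n2 = L * q - k * dot3 a b
      ∧ dot3 n2 n2 = L * r - k * dot3 b b := by
  have hm : m ^ 2 ≠ 0 := pow_ne_zero _ F.hm.ne'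
  refine ⟨mul_left_cancel₀ hm ?_, mul_left_cancel₀ hm ?_, mul_left_cancel₀ hm ?_⟩
  · rw [F.CH F.n1n, F.a1, F.b1]
    linear_combination p * hL - dot3 a a * hk
  · rw [F.CH F.n1n, F.a1, F.b1, F.a2, F.b2]
    linear_combination q * hL - dot3 a b * hk
  · rw [F.CH F.n2n, F.a2, F.b2]
    linear_combination r * hL - dot3 b b * hk

theorem disc_nonneg {A B C p q r : ℝ} (hA : 0 < A) (hG : 0 < A * C - B ^ 2) :
    4 * (A * C - B ^ 2) * (p * r - q ^ 2) ≤ (C * p - 2 * B * q + A * r) ^ 2 := by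
  have h : A ^ 2 * ((C * p - 2 * B * q + A * r) ^ 2 - 4 * (A * C - B ^ 2) * (p * r - q ^ 2))
      = (A * (A * r - C * p) - 2 * B * (A * q - B * p)) ^ 2
        + 4 * (A * C - B ^ 2) * (A * q - B * p) ^ 2 := by ring
  have h2 : 0 ≤ A ^ 2 * ((C * p - 2 * B * q + A * r) ^ 2
      - 4 * (A * C - B ^ 2) * (p * r - q ^ 2)) := by
    rw [h]; positivity
  have := nonneg_of_mul_nonneg_right h2 (by positivity)
  linarith

/-- orthogonal frame -/
theorem orth_frame {P Q N V W : Vec3} (hP : P ≠ 0) (hQ : Q ≠ 0) (hN : dot3 N N = 1)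
    (pq : dot3 P Q = 0) (pn : dot3 P N = 0) (qn : dot3 Q N = 0) (vq : dot3 V Q = 0)
    (wp : dot3 W P = 0) : dot3 V W = dot3 V N * dot3 W N := by
  have hQ' := (dot_self_pos hQ).ne'
  have hP' := (dot_self_pos hP).ne'
  have hd : dot3 (crossProduct P Q) N ≠ 0 := by
    intro h
    have g := gram3 P Q N N
    rw [h, pq, dot_comm N P, pn, dot_comm N Q, qn, hN] at g
    have : dot3 P P * dot3 Q Q = 0 := by linarith
    rcases mul_eq_zero.1 this with h | h
    · exact hP' h
    · exact hQ' h
  have e : W - dot3 W N • N - (dot3 W Q / dot3 Q Q) • Q = 0 := by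
    apply ext_det hd
    · simp only [dot_sub_l, dot_smul_l, wp, dot_comm N P, pn, dot_comm Q P, pq]; ring
    · simp only [dot_sub_l, dot_smul_l, dot_comm N Q, qn]; field_simp; ring
    · simp only [dot_sub_l, dot_smul_l, qn, hN]; ring
  have e2 := congrArg (dot3 V) e
  simp only [dot_sub_r, dot_smul_r, vq, dot_zero_r] at e2
  linarith

end linalg

section surf

theorem Frame.degenerate {a b n n1 n2 : Vec3} {m p q r : ℝ}
    (F : Frame a b n n1 n2 m p q r) {L k s : ℝ}
    (hL : dot3 b b * p - 2 * dot3 a b * q + dot3 a a * r = L * m ^ 2)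
    (hk : p * r - q ^ 2 = k * m ^ 2) (hs : k * s ^ 2 - L * s + 1 = 0) :
    crossProduct (a + s • n1) (b + s • n2) = 0 := by
  obtain ⟨h1, h2, h3⟩ := F.third hL hk
  apply dot_self_zero
  have G := F.gram
  rw [lagrange]
  have e1 : dot3 (a + s • n1) (a + s • n1) = (1 - k * s ^ 2) * (dot3 a a - s * p) := by
    simp only [dot_add_l, dot_add_r, dot_smul_l, dot_smul_r, dot_comm a n1, F.a1, h1]
    linear_combination -s * p * hs
  have e2 : dot3 (a + s • n1) (b + s • n2) = (1 - k * s ^ 2) * (dot3 a b - s * q) := by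
    simp only [dot_add_l, dot_add_r, dot_smul_l, dot_smul_r, dot_comm a n2, F.a2, F.b1, h2]
    linear_combination -s * q * hs
  have e3 : dot3 (b + s • n2) (b + s • n2) = (1 - k * s ^ 2) * (dot3 b b - s * r) := by
    simp only [dot_add_l, dot_add_r, dot_smul_l, dot_smul_r, dot_comm b n2, F.b2, h3]
    linear_combination -s * r * hs
  rw [dot_comm (b + s • n2) (a + s • n1), e1, e2, e3]
  linear_combination (1 - k * s ^ 2) ^ 2 * (-G - s * hL + s ^ 2 * hk + m ^ 2 * hs)

theorem exists_kernel {a b : Vec3} (h : crossProduct a b = 0) :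
    ∃ s t : ℝ, s • a + t • b = 0 ∧ ¬ (s = 0 ∧ t = 0) := by
  have : ¬ LinearIndependent ℝ ![a, b] := by
    rw [← crossProduct_ne_zero_iff_linearIndependent]
    simpa using h
  rw [LinearIndependent.pair_iff] at this
  push Not at this
  obtain ⟨s, t, h1, h2⟩ := this
  exact ⟨s, t, h1, fun h => h2 h.1 h.2⟩

theorem T_zero {Y Z : Fin 2 → Vec3} {YY ZZ : Fin 2 → Fin 2 → Vec3}
    (hY : ∀ i j, YY i j = YY j i) (hZ : ∀ i j, ZZ i j = ZZ j i)
    (h : ∀ i j k, dot3 (YY k i) (Z j) + dot3 (Y i) (ZZ k j) = 0)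
    {s t s' t' : ℝ} (hz : s • Z 0 + t • Z 1 = 0) (hy : s' • Y 0 + t' • Y 1 = 0)
    (hd : s * t' - t * s' ≠ 0) (i j k : Fin 2) :
    dot3 (YY k i) (Z j) = 0 := by
  have s1 : ∀ i j k, dot3 (YY k i) (Z j) = dot3 (YY i k) (Z j) := fun i j k => by rw [hY]
  have s2 : ∀ i j k, dot3 (YY k i) (Z j) = dot3 (YY j i) (Z k) := fun i j k => by
    have h1 := h i j k
    have h2 := h i k j
    rw [hZ j k] at h2
    linarith
  have e1 : ∀ i k, s * dot3 (YY k i) (Z 0) + t * dot3 (YY k i) (Z 1) = 0 := fun i k => by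
    have := congrArg (dot3 (YY k i)) hz
    simpa only [dot_add_r, dot_smul_r, dot_zero_r] using this
  have e2 : ∀ j k, s' * dot3 (YY k 0) (Z j) + t' * dot3 (YY k 1) (Z j) = 0 := fun j k => by
    have := congrArg (fun v => dot3 v (ZZ k j)) hy
    simp only [dot_add_l, dot_smul_l, dot_zero_l] at this
    linear_combination s' * h 0 j k + t' * h 1 j k - this
  have e3 : ∀ i k, s' * dot3 (YY k i) (Z 0) + t' * dot3 (YY k i) (Z 1) = 0 := fun i k => by
    rw [s1 i 0 k, s2 k 0 i, s1 k i 0, s1 i 1 k, s2 k 1 i, s1 k i 1]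
    exact e2 i k
  have z0 : dot3 (YY k i) (Z 0) = 0 := by
    apply mul_left_cancel₀ hd
    linear_combination t' * e1 i k - t * e3 i k
  have z1 : dot3 (YY k i) (Z 1) = 0 := by
    apply mul_left_cancel₀ hd
    linear_combination s * e3 i k - s' * e1 i k
  fin_cases j
  · exact z0
  · exact z1

structure Surf (U : Set Param) (x : Param → Vec3) : Prop where
  hU : IsOpen U
  hc : IsConnected U
  hx : ContDiffOn ℝ (⊤ : ℕ∞) x U
  imm : Immersed x U
  ell : ∀ u ∈ U, (fformII x u).PosDef

/-- area element -/
def areaEl (x : Param → Vec3) (u : Param) : ℝ := norm3 (crossProduct (pd 0 x u) (pd 1 x u))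

variable {U : Set Param} {x : Param → Vec3}

theorem Surf.cross_ne (S : Surf U x) {u : Param} (hu : u ∈ U) :
    crossProduct (pd 0 x u) (pd 1 x u) ≠ 0 :=
  crossProduct_ne_zero_iff_linearIndependent.2 (S.imm u hu)

theorem Surf.area_pos (S : Surf U x) {u : Param} (hu : u ∈ U) : 0 < areaEl x u :=
  Real.sqrt_pos.2 (dot_self_pos (S.cross_ne hu))

theorem Surf.cross_eq (S : Surf U x) {u : Param} (hu : u ∈ U) :
    crossProduct (pd 0 x u) (pd 1 x u) = areaEl x u • gaussMap x u := by
  have := (S.area_pos hu).ne'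
  unfold gaussMap
  rw [smul_smul]
  change _ = (areaEl x u * (areaEl x u)⁻¹) • _
  rw [mul_inv_cancel₀ this, one_smul]

theorem Surf.pd_sm (S : Surf U x) (i : Fin 2) : ContDiffOn ℝ (⊤ : ℕ∞) (pd i x) U :=
  pd_smooth S.hU i S.hx

theorem Surf.area_sm (S : Surf U x) : ContDiffOn ℝ (⊤ : ℕ∞) (areaEl x) U := by
  have h := cross_smooth (S.pd_sm 0) (S.pd_sm 1)
  exact (dot_smooth h h).sqrt fun _ hu => (dot_self_pos (S.cross_ne hu)).ne'

theorem Surf.n_sm (S : Surf U x) : ContDiffOn ℝ (⊤ : ℕ∞) (gaussMap x) U :=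
  (S.area_sm.inv fun u hu => (S.area_pos hu).ne').smul (cross_smooth (S.pd_sm 0) (S.pd_sm 1))

theorem Surf.nn (S : Surf U x) {u : Param} (hu : u ∈ U) :
    dot3 (gaussMap x u) (gaussMap x u) = 1 := by
  have h := S.cross_eq hu
  have hp := S.area_pos hu
  have h2 : areaEl x u ^ 2 = dot3 (crossProduct (pd 0 x u) (pd 1 x u))
      (crossProduct (pd 0 x u) (pd 1 x u)) := Real.sq_sqrt (dot_self_nonneg _)
  rw [h, dot_smul_l, dot_smul_r] at h2
  have h3 : areaEl x u ^ 2 ≠ 0 := by positivity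
  apply mul_left_cancel₀ h3
  linarith

theorem Surf.xn (S : Surf U x) (i : Fin 2) {u : Param} (hu : u ∈ U) :
    dot3 (pd i x u) (gaussMap x u) = 0 := by
  have hp := (S.area_pos hu).ne'
  have h : areaEl x u * dot3 (pd i x u) (gaussMap x u) = 0 := by
    rw [← dot_smul_r, ← S.cross_eq hu, dot_comm]
    fin_cases i
    · exact cross_dot_l _ _
    · exact cross_dot_r _ _
  simpa [hp] using h

theorem Surf.nin (S : Surf U x) (i : Fin 2) {u : Param} (hu : u ∈ U) :
    dot3 (pd i (gaussMap x) u) (gaussMap x u) = 0 := by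
  have := dot_const S.hU S.n_sm S.n_sm 1 (fun u hu => S.nn hu) i hu
  rw [dot_comm (gaussMap x u)] at this
  linarith

theorem Surf.nix (S : Surf U x) (i j : Fin 2) {u : Param} (hu : u ∈ U) :
    dot3 (pd i (gaussMap x) u) (pd j x u) = - fformII x u i j := by
  have := dot_const S.hU (S.pd_sm j) S.n_sm 0 (fun u hu => S.xn j hu) i hu
  rw [dot_comm (pd j x u)] at this
  simp only [fformII, Matrix.of_apply]
  linarith

theorem Surf.b_symm (S : Surf U x) {u : Param} (hu : u ∈ U) :
    fformII x u 1 0 = fformII x u 0 1 := by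
  simp only [fformII, Matrix.of_apply]
  rw [pd_symm S.hU 1 0 S.hx hu]

theorem Surf.frame (S : Surf U x) {u : Param} (hu : u ∈ U) :
    Frame (pd 0 x u) (pd 1 x u) (gaussMap x u) (pd 0 (gaussMap x) u) (pd 1 (gaussMap x) u)
      (areaEl x u) (fformII x u 0 0) (fformII x u 0 1) (fformII x u 1 1) where
  hm := S.area_pos hu
  hc := S.cross_eq hu
  nn := S.nn hu
  an := S.xn 0 hu
  bn := S.xn 1 hu
  n1n := S.nin 0 hu
  n2n := S.nin 1 hu
  a1 := S.nix 0 0 hu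
  b1 := S.nix 0 1 hu
  a2 := by rw [S.nix 1 0 hu, S.b_symm hu]
  b2 := S.nix 1 1 hu

theorem Surf.b_sm (S : Surf U x) (i j : Fin 2) :
    ContDiffOn ℝ (⊤ : ℕ∞) (fun v => fformII x v i j) U := by
  simp only [fformII, Matrix.of_apply]
  exact dot_smooth (pd_smooth S.hU i (S.pd_sm j)) S.n_sm

theorem Surf.det_eq (S : Surf U x) {u : Param} (hu : u ∈ U) :
    (fformII x u).det = fformII x u 0 0 * fformII x u 1 1 - fformII x u 0 1 ^ 2 := by
  rw [Matrix.det_fin_two, S.b_symm hu]; ring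

theorem Surf.detI (S : Surf U x) {u : Param} (hu : u ∈ U) :
    (fformI x u).det = areaEl x u ^ 2 := by
  rw [Matrix.det_fin_two, (S.frame hu).gram]
  simp only [fformI, Matrix.of_apply]
  rw [dot_comm (pd 1 x u) (pd 0 x u)]; ring

theorem inv2 (A : Matrix (Fin 2) (Fin 2) ℝ) :
    A⁻¹ 0 0 = (A.det)⁻¹ * A 1 1 ∧ A⁻¹ 0 1 = -((A.det)⁻¹ * A 0 1) ∧
    A⁻¹ 1 0 = -((A.det)⁻¹ * A 1 0) ∧ A⁻¹ 1 1 = (A.det)⁻¹ * A 0 0 := by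
  simp [Matrix.inv_def, Matrix.adjugate_fin_two]

theorem Surf.meanCurv_eq (S : Surf U x) {u : Param} (hu : u ∈ U) :
    dot3 (pd 1 x u) (pd 1 x u) * fformII x u 0 0 - 2 * dot3 (pd 0 x u) (pd 1 x u) * fformII x u 0 1
      + dot3 (pd 0 x u) (pd 0 x u) * fformII x u 1 1 = 2 * meanCurv x u * areaEl x u ^ 2 := by
  have hp := (S.area_pos hu).ne'
  obtain ⟨h1, h2, h3, h4⟩ := inv2 (fformI x u)
  unfold meanCurv
  simp only [Fin.sum_univ_two, h1, h2, h3, h4, S.detI hu, S.b_symm hu]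
  simp only [fformI, Matrix.of_apply]
  rw [dot_comm (pd 1 x u) (pd 0 x u)]
  field_simp
  ring

theorem Surf.gauss_eq (S : Surf U x) {u : Param} (hu : u ∈ U) :
    fformII x u 0 0 * fformII x u 1 1 - fformII x u 0 1 ^ 2 = gaussCurv x u * areaEl x u ^ 2 := by
  have hp := (S.area_pos hu).ne'
  unfold gaussCurv
  rw [S.detI hu, S.det_eq hu]
  field_simp

theorem Surf.det_pos (S : Surf U x) {u : Param} (hu : u ∈ U) : 0 < (fformII x u).det :=
  (S.ell u hu).det_pos

/-- `√K` -/
def wK (x : Param → Vec3) (u : Param) : ℝ := Real.sqrt |(fformII x u).det| / areaEl x u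

theorem Surf.sq_sm (S : Surf U x) :
    ContDiffOn ℝ (⊤ : ℕ∞) (fun v => Real.sqrt |(fformII x v).det|) U := by
  have h : ContDiffOn ℝ (⊤ : ℕ∞) (fun v => (fformII x v).det) U := by
    simp only [Matrix.det_fin_two]
    exact ((S.b_sm 0 0).mul (S.b_sm 1 1)).sub ((S.b_sm 0 1).mul (S.b_sm 1 0))
  refine (h.sqrt fun _ hu => (S.det_pos hu).ne').congr fun u hu => ?_
  rw [abs_of_pos (S.det_pos hu)]

theorem Surf.w_sm (S : Surf U x) : ContDiffOn ℝ (⊤ : ℕ∞) (wK x) U :=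
  S.sq_sm.div S.area_sm fun u hu => (S.area_pos hu).ne'

theorem Surf.inv_sm (S : Surf U x) (i j : Fin 2) :
    ContDiffOn ℝ (⊤ : ℕ∞) (fun v => (fformII x v)⁻¹ i j) U := by
  have h : ContDiffOn ℝ (⊤ : ℕ∞) (fun v => ((fformII x v).det)⁻¹) U := by
    simp only [Matrix.det_fin_two]
    refine ContDiffOn.inv
      (((S.b_sm 0 0).mul (S.b_sm 1 1)).sub ((S.b_sm 0 1).mul (S.b_sm 1 0))) fun u hu => ?_
    have := (S.det_pos hu).ne'
    rwa [Matrix.det_fin_two] at this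
  fin_cases i <;> fin_cases j <;> simp only [Fin.zero_eta, Fin.mk_one, (inv2 _).1,
    (inv2 _).2.1, (inv2 _).2.2.1, (inv2 _).2.2.2]
  · exact h.mul (S.b_sm 1 1)
  · exact (h.mul (S.b_sm 0 1)).neg
  · exact (h.mul (S.b_sm 1 0)).neg
  · exact h.mul (S.b_sm 0 0)

theorem Surf.w_sq (S : Surf U x) {u : Param} (hu : u ∈ U) : wK x u ^ 2 = gaussCurv x u := by
  unfold wK gaussCurv
  rw [div_pow, Real.sq_sqrt (abs_nonneg _), abs_of_pos (S.det_pos hu), S.detI hu]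

theorem Surf.w_pos (S : Surf U x) {u : Param} (hu : u ∈ U) : 0 < wK x u :=
  div_pos (Real.sqrt_pos.2 (abs_pos.2 (S.det_pos hu).ne')) (S.area_pos hu)

theorem Surf.flux0 (S : Surf U x) {u : Param} (hu : u ∈ U) :
    (Real.sqrt |(fformII x u).det| * (fformII x u)⁻¹ 0 0) • pd 0 (gaussMap x) u
      + (Real.sqrt |(fformII x u).det| * (fformII x u)⁻¹ 0 1) • pd 1 (gaussMap x) u
      = (- wK x u) • crossProduct (pd 1 x u) (gaussMap x u) := by
  have F := (S.frame hu).F1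
  have hp := (S.area_pos hu).ne'
  have hd := (S.det_pos hu).ne'
  rw [← S.det_eq hu] at F
  rw [(inv2 _).1, (inv2 _).2.1]
  unfold wK
  have : crossProduct (pd 1 x u) (gaussMap x u) = (-((fformII x u).det)⁻¹ * areaEl x u) •
      (fformII x u 1 1 • pd 0 (gaussMap x) u - fformII x u 0 1 • pd 1 (gaussMap x) u) := by
    rw [mul_smul, F, smul_smul, neg_mul_neg, inv_mul_cancel₀ hd, one_smul]
  rw [this]
  ext k
  simp only [Pi.add_apply, Pi.smul_apply, Pi.sub_apply, smul_eq_mul]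
  field_simp
  ring

theorem Surf.flux1 (S : Surf U x) {u : Param} (hu : u ∈ U) :
    (Real.sqrt |(fformII x u).det| * (fformII x u)⁻¹ 1 0) • pd 0 (gaussMap x) u
      + (Real.sqrt |(fformII x u).det| * (fformII x u)⁻¹ 1 1) • pd 1 (gaussMap x) u
      = wK x u • crossProduct (pd 0 x u) (gaussMap x u) := by
  have F := (S.frame hu).F2
  have hp := (S.area_pos hu).ne'
  have hd := (S.det_pos hu).ne'
  rw [← S.det_eq hu] at F
  rw [(inv2 _).2.2.1, (inv2 _).2.2.2, S.b_symm hu]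
  unfold wK
  have : crossProduct (pd 0 x u) (gaussMap x u) = (((fformII x u).det)⁻¹ * areaEl x u) •
      (-fformII x u 0 1 • pd 0 (gaussMap x) u + fformII x u 0 0 • pd 1 (gaussMap x) u) := by
    rw [mul_smul, F, smul_smul, inv_mul_cancel₀ hd, one_smul]
  rw [this]
  ext k
  simp only [Pi.add_apply, Pi.smul_apply, smul_eq_mul]
  field_simp

theorem Surf.beltrami (S : Surf U x) {u : Param} (hu : u ∈ U) :
    beltrami2 (fformII x) (gaussMap x) u = (Real.sqrt |(fformII x u).det|)⁻¹ •
      (pds 0 (wK x) u • crossProduct (pd 1 x u) (gaussMap x u)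
        - pds 1 (wK x) u • crossProduct (pd 0 x u) (gaussMap x u))
      + (2 * meanCurv x u) • gaussMap x u := by
  have hp := (S.area_pos hu).ne'
  have hsq : Real.sqrt |(fformII x u).det| ≠ 0 :=
    (Real.sqrt_pos.2 (abs_pos.2 (S.det_pos hu).ne')).ne'
  have hdiff : ∀ i j, DifferentiableAt ℝ (fun v => (Real.sqrt |(fformII x v).det|
      * (fformII x v)⁻¹ i j) • pd j (gaussMap x) v) u := fun i j =>
    smooth_diffAt S.hU ((S.sq_sm.mul (S.inv_sm i j)).smul (pd_smooth S.hU j S.n_sm)) hu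
  have c1 := cross_smooth (S.pd_sm 1) S.n_sm
  have c0 := cross_smooth (S.pd_sm 0) S.n_sm
  have wd := smooth_diffAt S.hU S.w_sm hu
  unfold beltrami2
  simp only [Fin.sum_univ_two]
  rw [← pd_add (hdiff 0 0) (hdiff 0 1), ← pd_add (hdiff 1 0) (hdiff 1 1),
    pd_congr S.hU (fun v hv => S.flux0 hv) hu, pd_congr S.hU (fun v hv => S.flux1 hv) hu,
    pd_smul wd (smooth_diffAt S.hU c0 hu), pd_cross S.hU (S.pd_sm 0) S.n_sm hu]
  have e : (fun v => (- wK x v) • crossProduct (pd 1 x v) (gaussMap x v))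
      = fun v => (-1 : ℝ) • (wK x v • crossProduct (pd 1 x v) (gaussMap x v)) := by
    ext v; simp
  have cw : DifferentiableAt ℝ
      (fun v => wK x v • crossProduct (pd 1 x v) (gaussMap x v)) u :=
    smooth_diffAt S.hU (S.w_sm.smul c1) hu
  rw [e, pd_const_smul cw,
    pd_smul wd (smooth_diffAt S.hU c1 hu), pd_cross S.hU (S.pd_sm 1) S.n_sm hu,
    pd_symm S.hU 0 1 S.hx hu]
  have H := (S.frame hu).Hn
  rw [S.meanCurv_eq hu] at H
  have H' : crossProduct (pd 1 x u) (pd 0 (gaussMap x) u)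
      = crossProduct (pd 0 x u) (pd 1 (gaussMap x) u)
        + (2 * meanCurv x u * areaEl x u) • gaussMap x u := by
    rw [← sub_eq_iff_eq_add']
    have := congrArg (fun v => (areaEl x u)⁻¹ • v) H
    simp only [smul_smul, inv_mul_cancel₀ hp, one_smul] at this
    rw [this]
    congr 1
    field_simp
  rw [H']
  ext k
  have hw : wK x u = Real.sqrt |(fformII x u).det| / areaEl x u := rfl
  rw [hw]
  simp only [Pi.add_apply, Pi.smul_apply, Pi.sub_apply, Pi.neg_apply, smul_eq_mul]
  field_simp
  ring

end surf

section final

variable {U : Set Param} {x : Param → Vec3}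

theorem Surf.consts (S : Surf U x) {lam : ℝ}
    (h : ∀ u ∈ U, beltrami2 (fformII x) (gaussMap x) u = lam • gaussMap x u) :
    ∃ k : ℝ, 0 < k ∧ ∀ u ∈ U, 2 * meanCurv x u = lam ∧ gaussCurv x u = k := by
  have key : ∀ u ∈ U, pds 0 (wK x) u = 0 ∧ pds 1 (wK x) u = 0 ∧ 2 * meanCurv x u = lam := by
    intro u hu
    have hsq : Real.sqrt |(fformII x u).det| ≠ 0 :=
      (Real.sqrt_pos.2 (abs_pos.2 (S.det_pos hu).ne')).ne'
    have F := S.frame hu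
    have hm := F.hm.ne'
    have e := h u hu
    rw [S.beltrami hu] at e
    have ea := congrArg (fun v => dot3 v (pd 0 x u)) e
    have eb := congrArg (fun v => dot3 v (pd 1 x u)) e
    have en := congrArg (fun v => dot3 v (gaussMap x u)) e
    simp only [dot_add_l, dot_sub_l, dot_smul_l, cross_dot_l, cross_dot_r, F.nn,
      dot_comm (gaussMap x u) (pd 0 x u), dot_comm (gaussMap x u) (pd 1 x u), F.an, F.bn,
      triple1 (pd 0 x u) (pd 1 x u) (gaussMap x u),
      triple2 (pd 0 x u) (pd 1 x u) (gaussMap x u), F.det] at ea eb en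
    refine ⟨?_, ?_, ?_⟩
    · simpa [hm, hsq, -abs_eq_zero] using ea
    · simpa [hm, hsq, -abs_eq_zero] using eb
    · simpa using en
  obtain ⟨c, hc⟩ := const_of_deriv S.hU S.hc S.w_sm (fun u hu i => by
    fin_cases i
    · exact (key u hu).1
    · exact (key u hu).2.1)
  obtain ⟨u0, hu0⟩ := S.hc.nonempty
  refine ⟨c ^ 2, ?_, fun u hu => ⟨(key u hu).2.2, ?_⟩⟩
  · have := S.w_pos hu0
    rw [hc u0 hu0] at this
    positivity
  · rw [← S.w_sq hu, hc u hu]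

theorem Surf.no_nonumbilic (S : Surf U x) {k L r s : ℝ} (hrs : r ≠ s) (hsum : k * (r + s) = L)
    (hprod : k * r * s = 1) (hL : ∀ u ∈ U, 2 * meanCurv x u = L)
    (hk : ∀ u ∈ U, gaussCurv x u = k) : False := by
  have hrs' : r - s ≠ 0 := sub_ne_zero.2 hrs
  have hk0 : k ≠ 0 := by rintro rfl; simp at hprod
  set N := gaussMap x with hN
  have Nsm : ContDiffOn ℝ (⊤ : ℕ∞) N U := S.n_sm
  set y : Param → Vec3 := fun v => x v + r • N v with hy
  set z : Param → Vec3 := fun v => x v + s • N v with hz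
  have ysm : ContDiffOn ℝ (⊤ : ℕ∞) y U := S.hx.add (Nsm.const_smul r)
  have zsm : ContDiffOn ℝ (⊤ : ℕ∞) z U := S.hx.add (Nsm.const_smul s)
  have xd : ∀ u ∈ U, DifferentiableAt ℝ x u := fun u hu => smooth_diffAt S.hU S.hx hu
  have Nd : ∀ u ∈ U, DifferentiableAt ℝ N u := fun u hu => smooth_diffAt S.hU Nsm hu
  have yi : ∀ i, ∀ u ∈ U, pd i y u = pd i x u + r • pd i N u := fun i u hu => by
    rw [hy, pd_add (xd u hu) ((Nd u hu).fun_const_smul r), pd_const_smul (Nd u hu)]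
  have zi : ∀ i, ∀ u ∈ U, pd i z u = pd i x u + s • pd i N u := fun i u hu => by
    rw [hz, pd_add (xd u hu) ((Nd u hu).fun_const_smul s), pd_const_smul (Nd u hu)]
  have Ni : ∀ i, ∀ u ∈ U, (r - s) • pd i N u = pd i y u - pd i z u := fun i u hu => by
    rw [yi i u hu, zi i u hu, sub_smul]; abel
  have hL' : ∀ u ∈ U, _ := fun u hu => (S.meanCurv_eq hu).trans (by rw [hL u hu])
  have hk' : ∀ u ∈ U, _ := fun u hu => (S.gauss_eq hu).trans (by rw [hk u hu])
  -- orthogonality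
  have yz : ∀ i j, ∀ u ∈ U, dot3 (pd i y u) (pd j z u) = 0 := by
    intro i j u hu
    have F := S.frame hu
    obtain ⟨h1, h2, h3⟩ := F.third (hL' u hu) (hk' u hu)
    rw [yi i u hu, zi j u hu]
    simp only [dot_add_l, dot_add_r, dot_smul_l, dot_smul_r]
    have q1 := F.a1
    have q2 := F.a2
    have q3 := F.b1
    have q4 := F.b2
    rw [← hN] at *
    rw [← hsum] at h1 h2 h3
    fin_cases i <;> fin_cases j <;> simp only [Fin.zero_eta, Fin.mk_one]
    · rw [dot_comm (pd 0 x u) (pd 0 N u), q1, h1]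
      linear_combination (fformII x u 0 0 * (r + s) - dot3 (pd 0 x u) (pd 0 x u)) * hprod
    · rw [dot_comm (pd 0 x u) (pd 1 N u), q2, q3, h2]
      linear_combination (fformII x u 0 1 * (r + s) - dot3 (pd 0 x u) (pd 1 x u)) * hprod
    · rw [dot_comm (pd 1 x u) (pd 0 N u), q2, q3, dot_comm (pd 1 N u) (pd 0 N u), h2,
        dot_comm (pd 1 x u) (pd 0 x u)]
      linear_combination (fformII x u 0 1 * (r + s) - dot3 (pd 0 x u) (pd 1 x u)) * hprod
    · rw [dot_comm (pd 1 x u) (pd 1 N u), q4, h3]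
      linear_combination (fformII x u 1 1 * (r + s) - dot3 (pd 1 x u) (pd 1 x u)) * hprod
  have yn : ∀ i, ∀ u ∈ U, dot3 (pd i y u) (N u) = 0 := fun i u hu => by
    rw [yi i u hu, dot_add_l, dot_smul_l, hN, S.xn i hu, S.nin i hu]; ring
  have zn : ∀ i, ∀ u ∈ U, dot3 (pd i z u) (N u) = 0 := fun i u hu => by
    rw [zi i u hu, dot_add_l, dot_smul_l, hN, S.xn i hu, S.nin i hu]; ring
  -- kernels
  have ker : ∀ u ∈ U, ∃ a b a' b' : ℝ, a • pd 0 z u + b • pd 1 z u = 0 ∧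
      a' • pd 0 y u + b' • pd 1 y u = 0 ∧ a • pd 0 y u + b • pd 1 y u ≠ 0 ∧
      a' • pd 0 z u + b' • pd 1 z u ≠ 0 := by
    intro u hu
    have F := S.frame hu
    have dz := F.degenerate (s := s) (hL' u hu) (hk' u hu)
      (by rw [← hsum]; linear_combination -hprod)
    have dy := F.degenerate (s := r) (hL' u hu) (hk' u hu)
      (by rw [← hsum]; linear_combination -hprod)
    rw [← zi 0 u hu, ← zi 1 u hu] at dz
    rw [← yi 0 u hu, ← yi 1 u hu] at dy
    obtain ⟨a, b, h1, h2⟩ := exists_kernel dz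
    obtain ⟨a', b', h1', h2'⟩ := exists_kernel dy
    have ind := LinearIndependent.pair_iff.1 (S.imm u hu)
    have comb : ∀ a b : ℝ, a • pd 0 z u + b • pd 1 z u = 0 → a • pd 0 y u + b • pd 1 y u = 0 →
        a = 0 ∧ b = 0 := by
      intro a b e1 e2
      apply ind
      have e3 : (r - s) • (a • pd 0 x u + b • pd 1 x u)
          = r • (a • pd 0 z u + b • pd 1 z u) - s • (a • pd 0 y u + b • pd 1 y u) := by
        rw [yi 0 u hu, yi 1 u hu, zi 0 u hu, zi 1 u hu]
        module
      rw [e1, e2, smul_zero, smul_zero, sub_zero] at e3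
      exact (smul_eq_zero.1 e3).resolve_left hrs'
    exact ⟨a, b, a', b', h1, h1', fun h => h2 (comb _ _ h1 h), fun h => h2' (comb _ _ h h1')⟩
  have T : ∀ i j k, ∀ u ∈ U, dot3 (pd k (pd i y) u) (pd j z u) = 0 := by
    intro i j k u hu
    obtain ⟨a, b, a', b', h1, h2, h3, h4⟩ := ker u hu
    refine T_zero (Y := fun i => pd i y u) (Z := fun i => pd i z u)
      (YY := fun k i => pd k (pd i y) u) (ZZ := fun k i => pd k (pd i z) u)
      (fun i j => pd_symm S.hU i j ysm hu) (fun i j => pd_symm S.hU i j zsm hu)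
      (fun i j k => dot_const S.hU (pd_smooth S.hU i ysm) (pd_smooth S.hU j zsm) 0
        (yz i j) k hu) h1 h2 ?_ i j k
    intro hd
    have e1 : a • (a' • pd 0 z u + b' • pd 1 z u) = 0 := by
      have : a • (a' • pd 0 z u + b' • pd 1 z u) = a' • (a • pd 0 z u + b • pd 1 z u)
          + (a * b' - b * a') • pd 1 z u := by module
      rw [this, h1, hd]; simp
    have e2 : b • (a' • pd 0 z u + b' • pd 1 z u) = 0 := by
      have : b • (a' • pd 0 z u + b' • pd 1 z u) = b' • (a • pd 0 z u + b • pd 1 z u)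
          - (a * b' - b * a') • pd 0 z u := by module
      rw [this, h1, hd]; simp
    have a0 := (smul_eq_zero.1 e1).resolve_right h4
    have b0 := (smul_eq_zero.1 e2).resolve_right h4
    apply h3
    rw [a0, b0]; simp
  have T' : ∀ i j k, ∀ u ∈ U, dot3 (pd k (pd j z) u) (pd i y u) = 0 := by
    intro i j k u hu
    have := dot_const S.hU (pd_smooth S.hU i ysm) (pd_smooth S.hU j zsm) 0 (yz i j) k hu
    rw [T i j k u hu, zero_add] at this
    rw [dot_comm, this]
  obtain ⟨u, hu⟩ := S.hc.nonempty
  obtain ⟨a, b, a', b', h1, h2, h3, h4⟩ := ker u hu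
  -- normal components
  have nY : ∀ k i, (r - s) * dot3 (pd k (pd i y) u) (N u) = - dot3 (pd i y u) (pd k y u) := by
    intro k i
    have e := dot_const S.hU (pd_smooth S.hU i ysm) Nsm 0 (yn i) k hu
    have e2 := congrArg (dot3 (pd i y u)) (Ni k u hu)
    rw [dot_smul_r, dot_sub_r, yz i k u hu] at e2
    linear_combination (r - s) * e - e2
  have nZ : ∀ k i, (r - s) * dot3 (pd k (pd i z) u) (N u) = dot3 (pd i z u) (pd k z u) := by
    intro k i
    have e := dot_const S.hU (pd_smooth S.hU i zsm) Nsm 0 (zn i) k hu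
    have e2 := congrArg (dot3 (pd i z u)) (Ni k u hu)
    rw [dot_smul_r, dot_sub_r, dot_comm (pd i z u) (pd k y u), yz k i u hu] at e2
    linear_combination (r - s) * e - e2
  have Q : ∀ i j k l, dot3 (pd k (pd i y) u) (pd l (pd j z) u)
      = dot3 (pd l (pd i y) u) (pd k (pd j z) u) := by
    intro i j k l
    have e1 := dot_const S.hU (pd_smooth S.hU k (pd_smooth S.hU i ysm)) (pd_smooth S.hU j zsm) 0
      (T i j k) l hu
    have e2 := dot_const S.hU (pd_smooth S.hU l (pd_smooth S.hU i ysm)) (pd_smooth S.hU j zsm) 0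
      (T i j l) k hu
    rw [pd_symm S.hU l k (pd_smooth S.hU i ysm) hu] at e1
    linarith
  have R : ∀ i j k l, dot3 (pd k (pd i y) u) (pd l (pd j z) u)
      = dot3 (pd k (pd i y) u) (N u) * dot3 (pd l (pd j z) u) (N u) := by
    intro i j k l
    refine orth_frame h3 h4 (S.nn hu) ?_ ?_ ?_ ?_ ?_
    · simp only [dot_add_l, dot_add_r, dot_smul_l, dot_smul_r, yz _ _ u hu]; ring
    · simp only [dot_add_l, dot_smul_l]; rw [yn 0 u hu, yn 1 u hu]; ring
    · simp only [dot_add_l, dot_smul_l]; rw [zn 0 u hu, zn 1 u hu]; ring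
    · simp only [dot_add_r, dot_smul_r, T _ _ _ u hu]; ring
    · simp only [dot_add_r, dot_smul_r, T' _ _ _ u hu]; ring
  have M : ∀ i j k l, dot3 (pd i y u) (pd k y u) * dot3 (pd j z u) (pd l z u)
      = dot3 (pd i y u) (pd l y u) * dot3 (pd j z u) (pd k z u) := by
    intro i j k l
    have e := Q i j k l
    rw [R, R] at e
    have := nY k i
    rw [← neg_eq_iff_eq_neg] at this
    rw [← this, ← nZ l j]
    have := nY l i
    rw [← neg_eq_iff_eq_neg] at this
    rw [← this, ← nZ k j]
    linear_combination -(r - s) ^ 2 * e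
  set P := a • pd 0 y u + b • pd 1 y u with hP
  set W := a' • pd 0 z u + b' • pd 1 z u with hW
  have M1 : ∀ i j k, dot3 (pd i y u) P * dot3 (pd j z u) (pd k z u) = 0 := by
    intro i j k
    have e := congrArg (dot3 (pd j z u)) h1
    simp only [dot_add_r, dot_smul_r, dot_zero_r] at e
    rw [hP, dot_add_r, dot_smul_r, dot_smul_r]
    linear_combination dot3 (pd i y u) (pd k y u) * e - a * M i j k 0 - b * M i j k 1
  have M2 : dot3 P P * dot3 W W = 0 := by
    have : dot3 P P = a * dot3 (pd 0 y u) P + b * dot3 (pd 1 y u) P := by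
      conv_lhs => rw [hP, dot_add_l, dot_smul_l, dot_smul_l]
    rw [this, hW]
    simp only [dot_add_l, dot_add_r, dot_smul_l, dot_smul_r, ← hP]
    linear_combination a * (a' * a' * M1 0 0 0 + a' * b' * M1 0 0 1 + a' * b' * M1 0 1 0
      + b' * b' * M1 0 1 1) + b * (a' * a' * M1 1 0 0 + a' * b' * M1 1 0 1 + a' * b' * M1 1 1 0
      + b' * b' * M1 1 1 1)
  exact (mul_pos (dot_self_pos h3) (dot_self_pos h4)).ne' M2

theorem Surf.sphere_of (S : Surf U x) {lam k : ℝ} (hk : 0 < k) (hl : lam ≠ 0)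
    (h : ∀ u ∈ U, 2 * meanCurv x u = lam ∧ gaussCurv x u = k) :
    ∃ c : Vec3, ∃ r : ℝ, 0 < r ∧ ∀ u ∈ U, norm3 (x u - c) = r := by
  obtain ⟨u0, hu0⟩ := S.hc.nonempty
  have hL' : ∀ u ∈ U, _ := fun u hu => (S.meanCurv_eq hu).trans (by rw [(h u hu).1])
  have hk' : ∀ u ∈ U, _ := fun u hu => (S.gauss_eq hu).trans (by rw [(h u hu).2])
  have disc : 4 * k ≤ lam ^ 2 := by
    have F := S.frame hu0
    have hm := F.hm
    have h0 : pd 0 x u0 ≠ 0 := (S.imm u0 hu0).ne_zero 0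
    have := disc_nonneg (A := dot3 (pd 0 x u0) (pd 0 x u0)) (B := dot3 (pd 0 x u0) (pd 1 x u0))
      (C := dot3 (pd 1 x u0) (pd 1 x u0)) (p := fformII x u0 0 0) (q := fformII x u0 0 1)
      (r := fformII x u0 1 1) (dot_self_pos h0) (by rw [← F.gram]; positivity)
    rw [hL' u0 hu0, hk' u0 hu0, ← F.gram] at this
    have h4 : 0 < areaEl x u0 ^ 4 := by positivity
    refine le_of_mul_le_mul_right ?_ h4
    linarith
  rcases disc.lt_or_eq with hlt | heq
  · exfalso
    set d := Real.sqrt (lam ^ 2 - 4 * k) with hd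
    have hd0 : 0 < d := Real.sqrt_pos.2 (by linarith)
    have hd2 : d ^ 2 = lam ^ 2 - 4 * k := Real.sq_sqrt (by linarith)
    refine S.no_nonumbilic (k := k) (L := lam) (r := (lam + d) / (2 * k))
      (s := (lam - d) / (2 * k)) ?_ ?_ ?_ (fun u hu => (h u hu).1) (fun u hu => (h u hu).2)
    · intro e
      field_simp at e
      linarith
    · field_simp
      ring
    · field_simp
      linear_combination -hd2
  · have umb : ∀ i, ∀ u ∈ U, pd i (gaussMap x) u + (lam / 2) • pd i x u = 0 := by
      intro i u hu
      apply dot_self_zero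
      have F := S.frame hu
      obtain ⟨h1, h2, h3⟩ := F.third (hL' u hu) (hk' u hu)
      simp only [dot_add_l, dot_add_r, dot_smul_l, dot_smul_r]
      fin_cases i <;> simp only [Fin.zero_eta, Fin.mk_one]
      · rw [dot_comm (pd 0 x u) (pd 0 _ u), F.a1, h1]
        linear_combination -(dot3 (pd 0 x u) (pd 0 x u) / 4) * heq
      · rw [dot_comm (pd 1 x u) (pd 1 _ u), F.b2, h3]
        linear_combination -(dot3 (pd 1 x u) (pd 1 x u) / 4) * heq
    obtain ⟨c, hc⟩ := const_of_deriv (f := fun v => gaussMap x v + (lam / 2) • x v) S.hU S.hc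
      (S.n_sm.add (S.hx.const_smul (lam / 2))) (fun u hu i => by
        have xd : DifferentiableAt ℝ x u := smooth_diffAt S.hU S.hx hu
        have nd : DifferentiableAt ℝ (gaussMap x) u := smooth_diffAt S.hU S.n_sm hu
        have e := umb i u hu
        rw [← pd_const_smul xd, ← pd_add nd (xd.fun_const_smul _)] at e
        exact e)
    refine ⟨(2 / lam) • c, |2 / lam|, by positivity, fun u hu => ?_⟩
    have e : x u - (2 / lam) • c = (-(2 / lam)) • gaussMap x u := by
      rw [← hc u hu, smul_add, smul_smul]
      have : 2 / lam * (lam / 2) = 1 := by field_simp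
      rw [this]
      module
    unfold norm3
    rw [e, dot_smul_l, dot_smul_r, S.nn hu, ← Real.sqrt_sq_eq_abs]
    congr 1
    ring

theorem Surf.of_sphere (S : Surf U x) {c : Vec3} {r : ℝ} (hr : 0 < r)
    (h : ∀ u ∈ U, norm3 (x u - c) = r) :
    ∀ u ∈ U, beltrami2 (fformII x) (gaussMap x) u = (2 / r) • gaussMap x u := by
  have h0 : ∀ u ∈ U, dot3 (x u - c) (x u - c) = r ^ 2 := fun u hu => by
    rw [← h u hu, norm3, Real.sq_sqrt (dot_self_nonneg _)]
  have csm : ContDiffOn ℝ (⊤ : ℕ∞) (fun v => x v - c) U := S.hx.sub contDiffOn_const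
  have h1 : ∀ i, ∀ u ∈ U, dot3 (pd i x u) (x u - c) = 0 := fun i u hu => by
    have := dot_const S.hU csm csm _ h0 i hu
    rw [pd_sub_const, dot_comm (x u - c)] at this
    linarith
  have h2 : ∀ i j, ∀ u ∈ U, dot3 (pd i (pd j x) u) (x u - c)
      + dot3 (pd j x u) (pd i x u) = 0 := fun i j u hu => by
    have := dot_const S.hU (S.pd_sm j) csm _ (h1 j) i hu
    rwa [pd_sub_const] at this
  have h3 : ∀ i j, ∀ u ∈ U, r * fformII x u i j = dot3 (pd j x u) (pd i x u) := by
    intro i j u hu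
    have F := S.frame hu
    set σ := dot3 (x u - c) (gaussMap x u) with hσ
    have e : x u - c - σ • gaussMap x u = 0 := by
      apply F.ext
      · rw [dot_sub_l, dot_smul_l, dot_comm _ (pd 0 x u), h1 0 u hu, dot_comm _ (pd 0 x u), F.an]
        ring
      · rw [dot_sub_l, dot_smul_l, dot_comm _ (pd 1 x u), h1 1 u hu, dot_comm _ (pd 1 x u), F.bn]
        ring
      · rw [dot_sub_l, dot_smul_l, F.nn, hσ]; ring
    have e' := sub_eq_zero.1 e
    have hb : ∀ i j, σ * fformII x u i j = - dot3 (pd j x u) (pd i x u) := by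
      intro i j
      have := h2 i j u hu
      rw [e', dot_smul_r] at this
      simp only [fformII, Matrix.of_apply]
      linarith
    have hs2 : σ ^ 2 = r ^ 2 := by
      have := h0 u hu
      rw [e', dot_smul_l, dot_smul_r, F.nn] at this
      linarith
    have hpos : 0 < fformII x u 0 0 := (S.ell u hu).diag_pos
    have hn0 : pd 0 x u ≠ 0 := (S.imm u hu).ne_zero 0
    have hg := dot_self_pos hn0
    have hsr : σ = -r := by
      rcases sq_eq_sq_iff_eq_or_eq_neg.1 hs2 with e1 | e1
      · exfalso
        have := hb 0 0
        rw [e1] at this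
        have := mul_pos hr hpos
        linarith
      · exact e1
    have := hb i j
    rw [hsr] at this
    linarith
  have g : ∀ u ∈ U, dot3 (pd 0 x u) (pd 0 x u) = r * fformII x u 0 0
      ∧ dot3 (pd 0 x u) (pd 1 x u) = r * fformII x u 0 1
      ∧ dot3 (pd 1 x u) (pd 1 x u) = r * fformII x u 1 1 := fun u hu =>
    ⟨(h3 0 0 u hu).symm, by rw [h3 0 1 u hu, dot_comm], (h3 1 1 u hu).symm⟩
  have hw : ∀ u ∈ U, wK x u = 1 / r := by
    intro u hu
    have F := S.frame hu
    have G := F.gram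
    have hm := F.hm
    obtain ⟨g1, g2, g3⟩ := g u hu
    rw [g1, g2, g3] at G
    have K := S.gauss_eq hu
    rw [← S.w_sq hu] at K
    have w0 := S.w_pos hu
    have : (wK x u * r) ^ 2 = 1 := by
      apply mul_right_cancel₀ (pow_ne_zero 2 hm.ne')
      linear_combination -r ^ 2 * K - G
    have : wK x u * r = 1 := by
      have hp : 0 < wK x u * r := by positivity
      nlinarith
    field_simp
    linarith
  intro u hu
  have F := S.frame hu
  have G := F.gram
  have hm := F.hm
  obtain ⟨g1, g2, g3⟩ := g u hu
  have H := S.meanCurv_eq hu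
  have H2 : 2 * meanCurv x u = 2 / r := by
    apply mul_right_cancel₀ (pow_ne_zero 2 hm.ne')
    rw [← H, G, g1, g2, g3]
    field_simp
    ring
  rw [S.beltrami hu, pds_congr S.hU hw hu, pds_congr S.hU hw hu, pds_const, pds_const, H2]
  simp

end final

/-- Theorem 2.2: `Δ^{II} n = λ n` on `U` for some `λ ≠ 0` iff `M` is part
of a sphere; moreover in that case `H` and `K` are nonzero constants on `U`. -/
theorem stmt12 (U : Set Param) (x : Param → Vec3)
    (hU : IsOpen U) (hUconn : IsConnected U)
    (hx : ContDiffOn ℝ (⊤ : ℕ∞) x U) (himm : Immersed x U)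
    (hell : ∀ u ∈ U, (fformII x u).PosDef) :
    ((∃ lam : ℝ, lam ≠ 0 ∧
        ∀ u ∈ U, beltrami2 (fformII x) (gaussMap x) u = lam • gaussMap x u) ↔
      (∃ c : Vec3, ∃ r : ℝ, 0 < r ∧ ∀ u ∈ U, norm3 (x u - c) = r)) ∧
    (∀ lam : ℝ, lam ≠ 0 →
      (∀ u ∈ U, beltrami2 (fformII x) (gaussMap x) u = lam • gaussMap x u) →
      ∃ h k : ℝ, h ≠ 0 ∧ k ≠ 0 ∧
        ∀ u ∈ U, meanCurv x u = h ∧ gaussCurv x u = k) := by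
  have S : Surf U x := ⟨hU, hUconn, hx, himm, hell⟩
  refine ⟨⟨?_, ?_⟩, ?_⟩
  · rintro ⟨lam, hl, h⟩
    obtain ⟨k, hk, hc⟩ := S.consts h
    exact S.sphere_of hk hl hc
  · rintro ⟨c, r, hr, h⟩
    exact ⟨2 / r, by positivity, S.of_sphere hr h⟩
  · intro lam hl h
    obtain ⟨k, hk, hc⟩ := S.consts h
    refine ⟨lam / 2, k, by positivity, hk.ne', fun u hu => ⟨?_, (hc u hu).2⟩⟩
    have := (hc u hu).1
    linarith
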